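/- Let k ≥ 2 and 0 < n < 2k−2 be integers and let P be a positive definite integral binary quadratic form of discriminant d < 0 whose CM point τ_P satisfies Re(Mτ_P) ≠ 0 for all M ∈ SL₂(ℤ). Then |d|^{(k−1)/2} · (R_{2−2k}^{k−1} P_{1−k,n})(τ_P) is a rational number if n is odd, and lies in iℚ if n is even. -/

import Mathlib

open Complex MeasureTheory
open scoped Real

noncomputable section

namespace LHMF

abbrev SL2Z := Matrix.SpecialLinearGroup (Fin 2) ℤ

/-- Möbius action of `SL₂(ℤ)` on `ℂ`. -/
def moeb (M : SL2Z) (τ : ℂ) : ℂ :=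
  ((M.1 0 0 : ℂ) * τ + (M.1 0 1 : ℂ)) / ((M.1 1 0 : ℂ) * τ + (M.1 1 1 : ℂ))

/-- Automorphy factor `j(M,τ) = cτ + d`. -/
def jfac (M : SL2Z) (τ : ℂ) : ℂ := (M.1 1 0 : ℂ) * τ + (M.1 1 1 : ℂ)

/-- `E₁`: union of all `SL₂(ℤ)`-translates of the positive imaginary axis. -/
def E1 : Set ℂ := ⋃ M : SL2Z, (fun y : ℝ => moeb M ((y : ℂ) * Complex.I)) '' Set.Ioi 0

/-- Wirtinger derivative `∂f/∂τ`. -/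
def dtau (f : ℂ → ℂ) (τ : ℂ) : ℂ :=
  (fderiv ℝ f τ 1 - Complex.I * fderiv ℝ f τ Complex.I) / 2

/-- Wirtinger derivative `∂f/∂τ̄`. -/
def dtaubar (f : ℂ → ℂ) (τ : ℂ) : ℂ :=
  (fderiv ℝ f τ 1 + Complex.I * fderiv ℝ f τ Complex.I) / 2

/-- The operator `ξ_κ f = 2i v^κ conj(∂f/∂τ̄)`. -/
def xiOp (κ : ℤ) (f : ℂ → ℂ) (τ : ℂ) : ℂ :=
  2 * Complex.I * ((τ.im : ℂ) ^ κ) * starRingEnd ℂ (dtaubar f τ)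

/-- The operator `𝒟 = (1/(2πi)) ∂/∂τ`. -/
def Dop (f : ℂ → ℂ) : ℂ → ℂ := fun τ => (2 * (π : ℂ) * Complex.I)⁻¹ * dtau f τ

/-- Maass raising operator of weight `κ`. -/
def raiseOp (κ : ℤ) (f : ℂ → ℂ) (τ : ℂ) : ℂ :=
  2 * Complex.I * dtau f τ + (κ : ℂ) * (τ.im : ℂ)⁻¹ * f τ

/-- Iterated raising operator `R_κ^m = R_{κ+2m-2} ∘ ⋯ ∘ R_{κ+2} ∘ R_κ`. -/
def raiseIter (κ : ℤ) : ℕ → (ℂ → ℂ) → (ℂ → ℂ)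
  | 0 => fun f => f
  | m + 1 => fun f => raiseOp (κ + 2 * m) (raiseIter κ m f)

/-- Petersson's Poincaré series `H_{k,k-1}(z,τ)`. -/
def Hpet (k : ℕ) (z τ : ℂ) : ℂ :=
  ∑' M : SL2Z, jfac M τ ^ (2 * k - 2) * ((moeb M τ).im : ℂ) ^ (2 * k - 1) *
    (z - moeb M τ)⁻¹ * (z - starRingEnd ℂ (moeb M τ)) ^ (1 - 2 * (k : ℤ))

/-- The locally harmonic Maass form `H_{1-k,n}`. -/
def Hlhmf (k n : ℕ) (τ : ℂ) : ℂ :=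
  (2 * Complex.I) ^ (2 * k - 2) / (2 * (π : ℂ)) *
    ∫ y in Set.Ioi (0 : ℝ), Hpet k ((y : ℂ) * Complex.I) τ * (y : ℂ) ^ n

/-- The cusp form `R_n` of weight `2k`. -/
def Rnform (k n : ℕ) (τ : ℂ) : ℂ :=
  (2 : ℂ) ^ (2 * k - 3) / (Complex.I ^ (2 * k - 1 - n) * (Nat.choose (2 * k - 2) n : ℂ) * (π : ℂ)) *
    ∑' M : SL2Z, jfac M τ ^ (-2 * (k : ℤ)) * moeb M τ ^ (-(n : ℤ) - 1)

/-- Holomorphic Eichler integral of `f` (weight `2k`), along a vertical path. -/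
def eichlerHol (k : ℕ) (f : ℂ → ℂ) (τ : ℂ) : ℂ :=
  (-2 * (π : ℂ) * Complex.I) ^ (2 * k - 1) / (Nat.factorial (2 * k - 2) : ℂ) *
    ∫ t in Set.Ioi (0 : ℝ), f (τ + (t : ℂ) * Complex.I) * ((t : ℂ) * Complex.I) ^ (2 * k - 2) *
      Complex.I

/-- Non-holomorphic Eichler integral `f^*` of `f` (weight `2k`), along a vertical path. -/
def eichlerStar (k : ℕ) (f : ℂ → ℂ) (τ : ℂ) : ℂ :=
  (-2 * Complex.I) ^ (1 - 2 * (k : ℤ)) *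
    ∫ t in Set.Ioi (0 : ℝ),
      starRingEnd ℂ (f (-(starRingEnd ℂ (-(starRingEnd ℂ τ) + (t : ℂ) * Complex.I)))) *
        (-(starRingEnd ℂ τ) + (t : ℂ) * Complex.I + τ) ^ (2 * k - 2) * Complex.I

/-- Bernoulli polynomial evaluated at a complex number. -/
def bernC (m : ℕ) (τ : ℂ) : ℂ := Polynomial.aeval τ (Polynomial.bernoulli m)

/-- Periodized Bernoulli polynomial `𝔹_m(τ) = B_m(τ - ⌊Re τ⌋)`. -/
def bernPer (m : ℕ) (τ : ℂ) : ℂ := bernC m (τ - (⌊τ.re⌋ : ℂ))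

/-- The period `r_n(E_{2k})` of the Eisenstein series, for `0 < n < 2k-2`. -/
def rnE (k n : ℕ) : ℚ :=
  if n % 2 = 0 then 0
  else (-1) ^ ((n - 1) / 2) * (2 * (k : ℚ)) * bernoulli (n + 1) * bernoulli (2 * k - 1 - n) /
    (bernoulli (2 * k) * ((n : ℚ) + 1) * ((2 * k - 1 - n : ℕ) : ℚ))

/-- The local polynomial `P_{1-k,n}`. -/
def Ppoly (k n : ℕ) (τ : ℂ) : ℂ :=
  (rnE k n : ℂ)
  + (-Complex.I) ^ (n + 1) / ((n : ℂ) + 1) * bernPer (n + 1) τ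
  + Complex.I ^ (n + 1) / ((2 * k - 1 - n : ℕ) : ℂ) * bernPer (2 * k - 1 - n) τ
  + Complex.I ^ (1 - (n : ℤ)) / 2 *
      ∑' M : {M : SL2Z // 0 < M.1 0 0 * M.1 1 0 ∧ (moeb M τ).re < 0},
        jfac M.1 τ ^ (2 * k - 2) *
          (moeb M.1 τ ^ n - (-1 : ℂ) ^ n * moeb M.1 τ ^ (2 * k - 2 - n))

/-- The binary quadratic form `[a,b,c]` evaluated at complex arguments. -/
def qfC (a b c : ℤ) (x y : ℂ) : ℂ := (a : ℂ) * x ^ 2 + (b : ℂ) * x * y + (c : ℂ) * y ^ 2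

/-- CM point of the positive definite form `[a,b,c]`. -/
def cmPoint (a b c : ℤ) : ℂ :=
  (-(b : ℂ) + Complex.I * ((Real.sqrt (((b ^ 2 - 4 * a * c).natAbs : ℝ))) : ℂ)) / (2 * (a : ℂ))

/-- The form `[a,b,c] ∘ M`. -/
def qfComp (a b c : ℤ) (M : SL2Z) : ℤ × ℤ × ℤ :=
  (a * (M.1 0 0) ^ 2 + b * (M.1 0 0) * (M.1 1 0) + c * (M.1 1 0) ^ 2,
   2 * a * (M.1 0 0) * (M.1 0 1) + b * ((M.1 0 0) * (M.1 1 1) + (M.1 0 1) * (M.1 1 0)) +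
     2 * c * (M.1 1 0) * (M.1 1 1),
   a * (M.1 0 1) ^ 2 + b * (M.1 0 1) * (M.1 1 1) + c * (M.1 1 1) ^ 2)

/-- `w_P`: order of the stabilizer of `P = [a,b,c]` in `PSL₂(ℤ)` (half the order of the
stabilizer in `SL₂(ℤ)`, which contains `±1`). -/
def wP (a b c : ℤ) : ℕ := Nat.card {M : SL2Z // qfComp a b c M = (a, b, c)} / 2

/-- The meromorphic modular form `f_{k,P}` for `P = [a,b,c]`. -/
def fkP (k : ℕ) (a b c : ℤ) (z : ℂ) : ℂ :=
  (((((b ^ 2 - 4 * a * c).natAbs : ℝ)) ^ ((k : ℝ) - 1 / 2) : ℝ) : ℂ) /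
      (2 * (π : ℂ) * (wP a b c : ℂ)) *
    ∑' M : SL2Z, (qfC a b c ((M.1 0 0 : ℂ) * z + (M.1 0 1 : ℂ))
      ((M.1 1 0 : ℂ) * z + (M.1 1 1 : ℂ))) ^ (-(k : ℤ))

/-- The `n`-th period `r_n(f) = ∫₀^∞ f(iy) y^n dy`. -/
def periodN (n : ℕ) (f : ℂ → ℂ) : ℂ :=
  ∫ y in Set.Ioi (0 : ℝ), f ((y : ℂ) * Complex.I) * (y : ℂ) ^ n

/-- Epstein zeta function of `[a,b,c]` at an integer `k`. -/
def epstein (a b c : ℤ) (k : ℕ) : ℝ :=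
  ∑' p : {p : ℤ × ℤ // p ≠ (0, 0)},
    ((a * p.1.1 ^ 2 + b * p.1.1 * p.1.2 + c * p.1.2 ^ 2 : ℤ) : ℝ) ^ (-(k : ℤ))

/-- `sgn(M)` for `M = (a,b;c,d)`: `sgn(ac)` if `ac ≠ 0`, else `sgn(bd)`. -/
def sgnM (M : SL2Z) : ℤ :=
  if M.1 0 0 * M.1 1 0 ≠ 0 then Int.sign (M.1 0 0 * M.1 1 0) else Int.sign (M.1 0 1 * M.1 1 1)

/-- Upper incomplete Gamma function `Γ(s,x)` for a natural number `s`. -/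
def GammaUpper (s : ℕ) (x : ℝ) : ℝ := ∫ t in Set.Ioi x, Real.exp (-t) * t ^ (s - 1)

/-- A cusp form of weight `2k` for `SL₂(ℤ)`, as a function on `ℂ` (holomorphic on `ℍ`,
modular of weight `2k`, vanishing at the cusp `i∞`). -/
def IsCuspForm2k (k : ℕ) (f : ℂ → ℂ) : Prop :=
  (∀ τ : ℂ, 0 < τ.im → DifferentiableAt ℂ f τ) ∧
  (∀ (M : SL2Z) (τ : ℂ), 0 < τ.im → f (moeb M τ) = jfac M τ ^ (2 * k) * f τ) ∧
  Filter.Tendsto f (Filter.comap Complex.im Filter.atTop) (nhds 0)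

section

open Filter Topology Polynomial

/-! Near `τ_P` the function `P_{1-k,n}` equals `I ^ (n + 1)` times a rational polynomial of degree
at most `2k - 2`, because the sum over `SL₂(ℤ)` is locally finite and its index set only changes
across `E₁`. By linearity it suffices to raise the powers `(z - x)^{2k-2}` with `x` rational, which
span these polynomials. Each raising operator replaces a factor `z - x` by `(z̄ - x) / Im z`, up to
an integer, so `k - 1` of them leave an integer multiple of `((z - x)(z̄ - x) / Im z)^{k-1}`. At
`z = τ_P` this is `(2 P(x, 1) / √|d|)^{k-1}`, and `|d|^{(k-1)/2}` clears the square root. -/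

/-! ### Powers of linear polynomials -/

/-- A linear functional killing `W` turns the curve into a polynomial with infinitely many zeros. -/
lemma mem_of_forall_sum_pow_smul_mem {K V : Type*} [Field K] [Infinite K] [AddCommGroup V]
    [Module K V] (W : Submodule K V) (v : ℕ → V) (N : ℕ)
    (h : ∀ x : K, ∑ i ∈ Finset.range N, x ^ i • v i ∈ W) {i : ℕ} (hi : i < N) : v i ∈ W := by
  refine (Subspace.forall_mem_dualAnnihilator_apply_eq_zero_iff W (v i)).1 fun φ hφ ↦ ?_
  have hzero : ∑ j ∈ Finset.range N, monomial j (φ (v j)) = 0 := by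
    refine Polynomial.funext fun x ↦ ?_
    simpa [eval_finsetSum, mul_comm] using (Submodule.mem_dualAnnihilator φ).1 hφ _ (h x)
  simpa [coeff_monomial, hi] using congrArg (coeff · i) hzero

lemma degreeLE_le_span_X_sub_C_pow (K : Type*) [Field K] [CharZero K] (N : ℕ) :
    degreeLE K N ≤ Submodule.span K (Set.range fun x : K ↦ (X - C x) ^ N) := by
  classical
  rw [degreeLE_eq_span_X_pow, Submodule.span_le]
  intro q hq
  obtain ⟨j, hj, rfl⟩ : ∃ j < N + 1, X ^ j = q := by simpa using hq
  have hcurve (x : K) : ∑ i ∈ Finset.range (N + 1), x ^ i • (N.choose i : K) • X ^ (N - i) ∈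
      Submodule.span K (Set.range fun x : K ↦ (X - C x) ^ N) := by
    refine Submodule.subset_span ⟨-x, ?_⟩
    beta_reduce
    rw [map_neg, sub_neg_eq_add, add_comm X, add_pow]
    refine Finset.sum_congr rfl fun i _ ↦ ?_
    simp only [smul_eq_C_mul, map_pow, map_natCast]
    ring
  have hmem := mem_of_forall_sum_pow_smul_mem _ _ _ hcurve (Nat.sub_lt_succ N j)
  rw [Nat.sub_sub_self (by omega)] at hmem
  refine (Submodule.smul_mem_iff _ ?_).1 hmem
  exact_mod_cast (Nat.choose_pos (Nat.sub_le N j)).ne'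

/-! ### Raising operators -/

lemma dtau_mul {f g : ℂ → ℂ} {τ : ℂ} (hf : DifferentiableAt ℝ f τ) (hg : DifferentiableAt ℝ g τ) :
    dtau (fun z ↦ f z * g z) τ = dtau f τ * g τ + f τ * dtau g τ := by
  simp only [dtau, fderiv_fun_mul hf hg, add_apply, smul_apply, smul_eq_mul]
  ring

lemma dtau_pow {f : ℂ → ℂ} {τ : ℂ} (hf : DifferentiableAt ℝ f τ) (m : ℕ) :
    dtau (fun z ↦ f z ^ m) τ = m * f τ ^ (m - 1) * dtau f τ := by
  simp only [dtau, fderiv_fun_pow m hf, smul_apply, smul_eq_mul, nsmul_eq_mul]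
  ring

lemma dtau_sub_const (x τ : ℂ) : dtau (fun z ↦ z - x) τ = 1 := by
  simp [dtau, fderiv_sub_const]

lemma dtau_conj_sub_const (x τ : ℂ) : dtau (fun z ↦ starRingEnd ℂ z - x) τ = 0 := by
  have hderiv : fderiv ℝ (fun z : ℂ ↦ starRingEnd ℂ z - x) τ = (conjCLE : ℂ →L[ℝ] ℂ) :=
    (conjCLE.hasFDerivAt.sub_const x).fderiv
  simp [dtau, hderiv]

lemma dtau_im (τ : ℂ) : dtau (fun z ↦ (z.im : ℂ)) τ = -(I / 2) := by
  have hderiv : fderiv ℝ (fun z : ℂ ↦ (z.im : ℂ)) τ = ofRealCLM.comp imCLM :=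
    (ofRealCLM.comp imCLM).fderiv
  simp [dtau, hderiv, neg_div]

/-- The quotient `(z̄ - x) / Im z`: each raising operator trades one factor `z - x` for one factor
`conjQuot x z`. -/
def conjQuot (x z : ℂ) : ℂ := (starRingEnd ℂ z - x) / z.im

lemma conjQuot_eq (x : ℂ) {z : ℂ} (hz : z.im ≠ 0) : conjQuot x z = (z - x) / z.im - 2 * I := by
  have hv : (z.im : ℂ) ≠ 0 := ofReal_ne_zero.2 hz
  have hconj : z - starRingEnd ℂ z = 2 * z.im * I := mod_cast sub_conj z
  rw [conjQuot, eq_sub_iff_add_eq, div_add' _ _ _ hv]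
  congr 1
  linear_combination -hconj

lemma differentiableAt_conjQuot (x : ℂ) {τ : ℂ} (hτ : τ.im ≠ 0) :
    DifferentiableAt ℝ (conjQuot x) τ := by
  unfold conjQuot
  simp only [div_eq_mul_inv]
  fun_prop (disch := exact ofReal_ne_zero.2 hτ)

lemma dtau_conjQuot (x : ℂ) {τ : ℂ} (hτ : τ.im ≠ 0) :
    dtau (conjQuot x) τ = I / (2 * τ.im) * conjQuot x τ := by
  have hv : (τ.im : ℂ) ≠ 0 := ofReal_ne_zero.2 hτ
  have hprod : (fun z : ℂ ↦ (z.im : ℂ) * conjQuot x z) =ᶠ[𝓝 τ] fun z ↦ starRingEnd ℂ z - x := by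
    filter_upwards [continuous_im.continuousAt.eventually_ne hτ] with z hz
    exact mul_div_cancel₀ _ (ofReal_ne_zero.2 hz)
  have hmul := dtau_mul (f := fun z ↦ (z.im : ℂ)) (by fun_prop) (differentiableAt_conjQuot x hτ)
  rw [dtau, hprod.fderiv_eq, ← dtau, dtau_conj_sub_const, dtau_im] at hmul
  field_simp
  linear_combination -2 * hmul

lemma raiseOp_eventuallyEq {f g : ℂ → ℂ} {τ : ℂ} (h : f =ᶠ[𝓝 τ] g) (κ : ℤ) :
    raiseOp κ f =ᶠ[𝓝 τ] raiseOp κ g := by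
  filter_upwards [h, h.fderiv (𝕜 := ℝ)] with z hz hz'
  rw [raiseOp, raiseOp, dtau, dtau, hz, hz']

lemma raiseIter_eventuallyEq {f g : ℂ → ℂ} {τ : ℂ} (h : f =ᶠ[𝓝 τ] g) (κ : ℤ) (m : ℕ) :
    raiseIter κ m f =ᶠ[𝓝 τ] raiseIter κ m g := by
  induction m with
  | zero => exact h
  | succ m ih => exact raiseOp_eventuallyEq ih _

lemma analyticAt_dtau {f : ℂ → ℂ} {τ : ℂ} (hf : AnalyticAt ℝ f τ) : AnalyticAt ℝ (dtau f) τ := by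
  have hderiv (w : ℂ) : AnalyticAt ℝ (fun z ↦ fderiv ℝ f z w) τ :=
    (ContinuousLinearMap.apply ℝ ℂ w).analyticAt _ |>.comp hf.fderiv
  exact ((hderiv 1).sub (analyticAt_const.mul (hderiv I))).div_const

lemma analyticAt_raiseOp {f : ℂ → ℂ} {τ : ℂ} (hτ : τ.im ≠ 0) (hf : AnalyticAt ℝ f τ) (κ : ℤ) :
    AnalyticAt ℝ (raiseOp κ f) τ := by
  have hinv : AnalyticAt ℝ (fun z ↦ (z.im : ℂ)⁻¹) τ :=
    ((ofRealCLM.comp imCLM).analyticAt τ).inv (ofReal_ne_zero.2 hτ)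
  exact (analyticAt_const.mul (analyticAt_dtau hf)).add ((analyticAt_const.mul hinv).mul hf)

lemma analyticAt_raiseIter {f : ℂ → ℂ} {τ : ℂ} (hτ : τ.im ≠ 0) (hf : AnalyticAt ℝ f τ) (κ : ℤ)
    (m : ℕ) : AnalyticAt ℝ (raiseIter κ m f) τ := by
  induction m with
  | zero => exact hf
  | succ m ih => exact analyticAt_raiseOp hτ ih _

lemma raiseOp_sum {ι : Type*} (s : Finset ι) (u : ι → ℂ) {f : ι → ℂ → ℂ} (κ : ℤ) {τ : ℂ}
    (hf : ∀ i ∈ s, DifferentiableAt ℝ (f i) τ) :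
    raiseOp κ (fun z ↦ ∑ i ∈ s, u i * f i z) τ = ∑ i ∈ s, u i * raiseOp κ (f i) τ := by
  have hderiv : fderiv ℝ (fun z ↦ ∑ i ∈ s, u i * f i z) τ = ∑ i ∈ s, u i • fderiv ℝ (f i) τ :=
    (HasFDerivAt.fun_sum fun i hi ↦ (hf i hi).hasFDerivAt.const_mul (u i)).fderiv
  simp only [raiseOp, dtau, hderiv, sum_apply, smul_apply, smul_eq_mul, Finset.mul_sum,
    ← Finset.sum_sub_distrib, Finset.sum_div, ← Finset.sum_add_distrib]
  exact Finset.sum_congr rfl fun i _ ↦ by ring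

lemma raiseOp_const_mul (u : ℂ) {f : ℂ → ℂ} (κ : ℤ) {τ : ℂ} (hf : DifferentiableAt ℝ f τ) :
    raiseOp κ (fun z ↦ u * f z) τ = u * raiseOp κ f τ := by
  simpa using raiseOp_sum {()} (fun _ ↦ u) (f := fun _ ↦ f) κ fun _ _ ↦ hf

lemma raiseIter_sum {ι : Type*} (s : Finset ι) (u : ι → ℂ) {f : ι → ℂ → ℂ} (κ : ℤ) (m : ℕ)
    {τ : ℂ} (hτ : τ.im ≠ 0) (hf : ∀ i ∈ s, AnalyticAt ℝ (f i) τ) :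
    raiseIter κ m (fun z ↦ ∑ i ∈ s, u i * f i z) =ᶠ[𝓝 τ]
      fun z ↦ ∑ i ∈ s, u i * raiseIter κ m (f i) z := by
  induction m with
  | zero => rfl
  | succ m ih =>
    refine (raiseOp_eventuallyEq ih _).trans ?_
    have hanalytic : ∀ᶠ z in 𝓝 τ, ∀ i ∈ s, AnalyticAt ℝ (raiseIter κ m (f i)) z :=
      (Filter.eventually_all_finset s).2 fun i hi ↦
        (analyticAt_raiseIter hτ (hf i hi) κ m).eventually_analyticAt
    filter_upwards [hanalytic] with z hz
    exact raiseOp_sum s u _ fun i hi ↦ (hz i hi).differentiableAt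

lemma raiseOp_sub_pow_mul_conjQuot_pow (x : ℂ) (l m : ℕ) {τ : ℂ} (hτ : τ.im ≠ 0) :
    raiseOp (m - l) (fun z ↦ (z - x) ^ l * conjQuot x z ^ m) τ =
      -l * ((τ - x) ^ (l - 1) * conjQuot x τ ^ (m + 1)) := by
  have hdiff := differentiableAt_conjQuot x hτ
  have hpow (j : ℕ) (w : ℂ) : j * w ^ (j - 1) * w = j * w ^ j := by
    cases j <;> simp [pow_succ, mul_assoc]
  rw [raiseOp, dtau_mul (f := fun z ↦ (z - x) ^ l) (by fun_prop) (hdiff.fun_pow m),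
    dtau_pow (f := fun z ↦ z - x) (by fun_prop), dtau_pow hdiff, dtau_sub_const,
    dtau_conjQuot x hτ]
  push_cast
  linear_combination
    (I ^ 2 * (τ - x) ^ l * (τ.im : ℂ)⁻¹) * hpow m (conjQuot x τ)
      + (m * (τ.im : ℂ)⁻¹ * (τ - x) ^ l * conjQuot x τ ^ m) * I_sq
      + (l * (τ - x) ^ (l - 1) * conjQuot x τ ^ m) * conjQuot_eq x hτ
      + (conjQuot x τ ^ m * (τ.im : ℂ)⁻¹) * hpow l (τ - x)

lemma raiseIter_sub_pow {N m : ℕ} (hm : m ≤ N) (x : ℂ) {τ : ℂ} (hτ : τ.im ≠ 0) :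
    raiseIter (-N) m (fun z ↦ (z - x) ^ N) τ =
      (-1) ^ m * N.descFactorial m * ((τ - x) ^ (N - m) * conjQuot x τ ^ m) := by
  induction m generalizing τ with
  | zero => simp [raiseIter]
  | succ m ih =>
    have hprev : raiseIter (-N) m (fun z ↦ (z - x) ^ N) =ᶠ[𝓝 τ] fun z ↦
        (-1) ^ m * N.descFactorial m * ((z - x) ^ (N - m) * conjQuot x z ^ m) := by
      filter_upwards [continuous_im.continuousAt.eventually_ne hτ] with z hz
      exact ih (by omega) hz
    have hdiff : DifferentiableAt ℝ (fun z ↦ (z - x) ^ (N - m) * conjQuot x z ^ m) τ :=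
      DifferentiableAt.fun_mul (by fun_prop) ((differentiableAt_conjQuot x hτ).fun_pow m)
    have hweight : -(N : ℤ) + 2 * m = m - (N - m : ℕ) := by omega
    calc raiseIter (-N) (m + 1) (fun z ↦ (z - x) ^ N) τ
      _ = raiseOp (m - (N - m : ℕ)) (fun z ↦
            (-1) ^ m * N.descFactorial m * ((z - x) ^ (N - m) * conjQuot x z ^ m)) τ := by
          rw [← hweight]
          exact (raiseOp_eventuallyEq hprev _).eq_of_nhds
      _ = (-1) ^ m * N.descFactorial m *
            (-(N - m : ℕ) * ((τ - x) ^ (N - m - 1) * conjQuot x τ ^ (m + 1))) := by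
          rw [raiseOp_const_mul _ _ hdiff, raiseOp_sub_pow_mul_conjQuot_pow x _ _ hτ]
      _ = (-1) ^ (m + 1) * N.descFactorial (m + 1) *
            ((τ - x) ^ (N - (m + 1)) * conjQuot x τ ^ (m + 1)) := by
          rw [Nat.descFactorial_succ, Nat.sub_sub]
          push_cast
          ring

/-! ### CM points -/

lemma sqrt_disc_sq {a b c : ℤ} (hd : b ^ 2 - 4 * a * c < 0) :
    √((b ^ 2 - 4 * a * c).natAbs : ℝ) ^ 2 = 4 * a * c - b ^ 2 := by
  rw [Real.sq_sqrt (Nat.cast_nonneg _), Nat.cast_natAbs, abs_of_neg hd]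
  push_cast
  ring

lemma cmPoint_eq (a b c : ℤ) : cmPoint a b c =
    (-b / (2 * a) : ℝ) + (√((b ^ 2 - 4 * a * c).natAbs : ℝ) / (2 * a) : ℝ) * I := by
  rw [cmPoint]
  push_cast
  ring

lemma cmPoint_im (a b c : ℤ) :
    (cmPoint a b c).im = √((b ^ 2 - 4 * a * c).natAbs : ℝ) / (2 * a) := by
  rw [cmPoint_eq, ← mk_eq_add_mul_I]

lemma cmPoint_im_pos {a b c : ℤ} (ha : 0 < a) (hd : b ^ 2 - 4 * a * c < 0) :
    0 < (cmPoint a b c).im := by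
  rw [cmPoint_im]
  have := Int.natAbs_pos.2 hd.ne
  positivity

lemma sqrt_disc_mul_sub_mul_conjQuot_cmPoint {a b c : ℤ} (ha : a ≠ 0)
    (hd : b ^ 2 - 4 * a * c < 0) (x : ℂ) :
    (√((b ^ 2 - 4 * a * c).natAbs : ℝ) : ℂ) *
      ((cmPoint a b c - x) * conjQuot x (cmPoint a b c)) = 2 * qfC a b c x 1 := by
  have hsq := congrArg ofReal (sqrt_disc_sq hd)
  have hs : (√((b ^ 2 - 4 * a * c).natAbs : ℝ) : ℂ) ≠ 0 :=
    ofReal_ne_zero.2 (Real.sqrt_pos.2 (Nat.cast_pos.2 (Int.natAbs_pos.2 hd.ne))).ne'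
  rw [conjQuot, cmPoint_im, cmPoint_eq, qfC]
  generalize √((b ^ 2 - 4 * a * c).natAbs : ℝ) = s at hs hsq ⊢
  simp only [map_add, map_mul, conj_ofReal, conj_I]
  push_cast at hsq ⊢
  have ha' : (a : ℂ) ≠ 0 := Int.cast_ne_zero.2 ha
  field_simp
  linear_combination hsq - (s : ℂ) ^ 2 * I_sq

lemma sqrt_disc_pow_mul_raiseIter_sub_pow {a b c : ℤ} (ha : 0 < a) (hd : b ^ 2 - 4 * a * c < 0)
    (K : ℕ) (x : ℂ) :
    (√((b ^ 2 - 4 * a * c).natAbs : ℝ) : ℂ) ^ K *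
        raiseIter (-(2 * K : ℕ)) K (fun z ↦ (z - x) ^ (2 * K)) (cmPoint a b c) =
      (-1) ^ K * (2 * K).descFactorial K * (2 * qfC a b c x 1) ^ K := by
  rw [raiseIter_sub_pow (by omega) x (cmPoint_im_pos ha hd).ne', two_mul, Nat.add_sub_cancel,
    ← sqrt_disc_mul_sub_mul_conjQuot_cmPoint ha.ne' hd, mul_pow, mul_pow]
  ring

lemma exists_rat_sqrt_disc_pow_mul_raiseIter_aeval {a b c : ℤ} (ha : 0 < a)
    (hd : b ^ 2 - 4 * a * c < 0) {K : ℕ} {p : ℚ[X]} (hp : p.natDegree ≤ 2 * K) (u : ℂ) :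
    ∃ q : ℚ, (√((b ^ 2 - 4 * a * c).natAbs : ℝ) : ℂ) ^ K *
      raiseIter (-(2 * K : ℕ)) K (fun z ↦ u * aeval z p) (cmPoint a b c) = u * q := by
  obtain ⟨w, rfl⟩ := Finsupp.mem_span_range_iff_exists_finsupp.1
    (degreeLE_le_span_X_sub_C_pow ℚ (2 * K) (mem_degreeLE.2 (degree_le_of_natDegree_le hp)))
  have hexpand : (fun z ↦ u * aeval z (w.sum fun x r ↦ r • (X - C x) ^ (2 * K))) =
      fun z : ℂ ↦ ∑ x ∈ w.support, u * w x * (z - x) ^ (2 * K) := by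
    funext z
    simp [Finsupp.sum, Finset.mul_sum, Algebra.smul_def, mul_assoc]
  have hraise := raiseIter_sum w.support (fun x ↦ u * w x) (f := fun x z ↦ (z - x) ^ (2 * K))
    (-(2 * K : ℕ)) K (cmPoint_im_pos ha hd).ne' fun x _ ↦ by fun_prop
  refine ⟨∑ x ∈ w.support, w x *
    ((-1) ^ K * (2 * K).descFactorial K * (2 * (a * x ^ 2 + b * x + c)) ^ K), ?_⟩
  rw [hexpand, hraise.eq_of_nhds, Rat.cast_sum, Finset.mul_sum, Finset.mul_sum]
  refine Finset.sum_congr rfl fun x _ ↦ ?_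
  rw [mul_left_comm, sqrt_disc_pow_mul_raiseIter_sub_pow ha hd, qfC]
  push_cast
  ring

/-! ### Local finiteness -/

lemma jfac_ne_zero (M : SL2Z) {τ : ℂ} (hτ : 0 < τ.im) : jfac M τ ≠ 0 := by
  have hdenom := UpperHalfPlane.denom_ne_zero (M : GL (Fin 2) ℝ) ⟨τ, hτ⟩
  rwa [ModularGroup.denom_apply] at hdenom

/-- The matrices `M = (a,b;c,d)` indexing the sum in `Ppoly`. As `M∞ = a/c`, these are the `M` for
which the geodesic `M⁻¹(iℝ₊)` separates `τ` from `i∞` and `Mτ` lies to the left of `iℝ₊`. -/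
def crossingMatrices (τ : ℂ) : Set SL2Z := {M | 0 < M.1 0 0 * M.1 1 0 ∧ (moeb M τ).re < 0}

/-- The rows `α = aτ + b` and `γ = cτ + d` satisfy `aγ - cα = 1`, and `ac > 0 > Re(α γ̄)` rules out
cancellation in `|aγ - cα|²`. -/
lemma sq_mul_normSq_add_sq_mul_normSq_le_one {M : SL2Z} {τ : ℂ} (hM : M ∈ crossingMatrices τ) :
    (M.1 0 0 : ℝ) ^ 2 * normSq (M.1 1 0 * τ + M.1 1 1) +
      (M.1 1 0 : ℝ) ^ 2 * normSq (M.1 0 0 * τ + M.1 0 1) ≤ 1 := by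
  obtain ⟨hac, hre⟩ := hM
  have hdet : (M.1 0 0 : ℂ) * M.1 1 1 - M.1 0 1 * M.1 1 0 = 1 :=
    mod_cast (Matrix.det_fin_two M.1).symm.trans M.2
  rw [moeb] at hre
  set α : ℂ := M.1 0 0 * τ + M.1 0 1
  set γ : ℂ := M.1 1 0 * τ + M.1 1 1
  have hunit : (M.1 0 0 : ℂ) * γ - M.1 1 0 * α = 1 := by linear_combination hdet
  have hinner : (α * starRingEnd ℂ γ).re < 0 := by
    rw [div_eq_mul_inv, inv_def, ← mul_assoc, re_mul_ofReal] at hre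
    exact neg_of_mul_neg_left hre (inv_nonneg.2 (normSq_nonneg γ))
  have hcross : ((M.1 0 0 : ℂ) * γ * starRingEnd ℂ (M.1 1 0 * α)).re =
      (M.1 0 0 * M.1 1 0 : ℤ) * (α * starRingEnd ℂ γ).re := by
    simp only [map_mul, map_intCast, mul_re, mul_im, intCast_re, intCast_im, conj_re, conj_im,
      Int.cast_mul]
    ring
  have hexpand := congrArg normSq hunit
  rw [normSq_sub, hcross, normSq_mul, normSq_mul, normSq_intCast, normSq_intCast, ← sq, ← sq,
    normSq_one] at hexpand
  linarith [mul_neg_of_pos_of_neg (Int.cast_pos.2 hac) hinner]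

lemma norm_row_le_one_of_mem_crossingMatrices {M : SL2Z} {τ : ℂ} (hM : M ∈ crossingMatrices τ)
    (i : Fin 2) : ‖(M.1 i 0 : ℂ) * τ + M.1 i 1‖ ≤ 1 := by
  have hle := sq_mul_normSq_add_sq_mul_normSq_le_one hM
  have hmul {m : ℤ} (hm : m ≠ 0) (w : ℂ) : normSq w ≤ (m : ℝ) ^ 2 * normSq w :=
    le_mul_of_one_le_left (normSq_nonneg w)
      (mod_cast (one_le_sq_iff_one_le_abs m).2 (Int.one_le_abs hm))
  have hγ := hmul (left_ne_zero_of_mul hM.1.ne') (M.1 1 0 * τ + M.1 1 1)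
  have hα := hmul (right_ne_zero_of_mul hM.1.ne') (M.1 0 0 * τ + M.1 0 1)
  rw [← sq_le_one_iff₀ (norm_nonneg _), ← normSq_eq_norm_sq]
  revert i
  rw [Fin.forall_fin_two]
  constructor <;> linarith [normSq_nonneg (M.1 0 0 * τ + M.1 0 1 : ℂ),
    normSq_nonneg (M.1 1 0 * τ + M.1 1 1 : ℂ)]

lemma finite_setOf_norm_row_le (R : ℝ) : {M : SL2Z | ∀ i, ‖M.1 i‖ ≤ R}.Finite := by
  have hball : (Metric.closedBall (0 : Fin 2 → ℤ) R).Finite :=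
    (isCompact_closedBall _ _).finite_of_discrete
  have hbox : {M : Fin 2 → Fin 2 → ℤ | ∀ i, M i ∈ Metric.closedBall 0 R}.Finite :=
    Set.Finite.pi' fun _ ↦ hball
  refine (hbox.preimage (Subtype.val_injective (p := fun M ↦ Matrix.det M = 1)).injOn).subset ?_
  exact fun M hM i ↦ mem_closedBall_zero_iff.2 (hM i)

lemma exists_eventually_norm_row_le {τ₀ : ℂ} (hτ₀ : 0 < τ₀.im) :
    ∃ R : ℝ, ∀ᶠ τ in 𝓝 τ₀, crossingMatrices τ ⊆ {M | ∀ i, ‖M.1 i‖ ≤ R} := by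
  have hbase : 0 < τ₀.im / 2 := by positivity
  refine ⟨1 / EisensteinSeries.r ⟨⟨|τ₀.re| + 1, τ₀.im / 2⟩, hbase⟩, ?_⟩
  filter_upwards [continuous_re.abs.continuousAt.eventually (gt_mem_nhds (lt_add_one |τ₀.re|)),
    continuous_im.continuousAt.eventually (lt_mem_nhds (half_lt_self hτ₀))] with τ hre him M hM i
  let z : UpperHalfPlane := ⟨τ, hbase.trans him⟩
  have hstrip : z ∈ UpperHalfPlane.verticalStrip (|τ₀.re| + 1) (τ₀.im / 2) := ⟨hre.le, him.le⟩
  rw [le_div_iff₀' (EisensteinSeries.r_pos _)]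
  calc _ ≤ EisensteinSeries.r z * ‖M.1 i‖ := by
        gcongr
        exact EisensteinSeries.r_lower_bound_on_verticalStrip _ hbase hstrip
    _ ≤ ‖(M.1 i 0 : ℂ) * τ + M.1 i 1‖ :=
        EisensteinSeries.r_mul_max_le z (Matrix.SpecialLinearGroup.row_ne_zero M i)
    _ ≤ 1 := norm_row_le_one_of_mem_crossingMatrices hM i

lemma finite_crossingMatrices {τ : ℂ} (hτ : 0 < τ.im) : (crossingMatrices τ).Finite := by
  obtain ⟨R, hR⟩ := exists_eventually_norm_row_le hτ
  exact (finite_setOf_norm_row_le R).subset hR.self_of_nhds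

lemma eventually_re_moeb_neg_iff {M : SL2Z} {τ₀ : ℂ} (hτ₀ : 0 < τ₀.im) (hre : (moeb M τ₀).re ≠ 0) :
    ∀ᶠ τ in 𝓝 τ₀, (moeb M τ).re < 0 ↔ (moeb M τ₀).re < 0 := by
  have hcont : ContinuousAt (fun τ ↦ (moeb M τ).re) τ₀ := by
    unfold moeb
    exact continuous_re.continuousAt.comp
      (ContinuousAt.div (by fun_prop) (by fun_prop) (jfac_ne_zero M hτ₀))
  rcases hre.lt_or_gt with hneg | hpos
  · filter_upwards [hcont.eventually (gt_mem_nhds hneg)] with τ hτ using iff_of_true hτ hneg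
  · filter_upwards [hcont.eventually (lt_mem_nhds hpos)] with τ hτ
      using iff_of_false hτ.not_gt hpos.not_gt

lemma eventually_crossingMatrices_eq {τ₀ : ℂ} (hτ₀ : 0 < τ₀.im)
    (hre : ∀ M : SL2Z, (moeb M τ₀).re ≠ 0) :
    ∀ᶠ τ in 𝓝 τ₀, crossingMatrices τ = crossingMatrices τ₀ := by
  obtain ⟨R, hR⟩ := exists_eventually_norm_row_le hτ₀
  have hsign : ∀ᶠ τ in 𝓝 τ₀, ∀ M ∈ {M : SL2Z | ∀ i, ‖M.1 i‖ ≤ R},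
      ((moeb M τ).re < 0 ↔ (moeb M τ₀).re < 0) :=
    (Filter.eventually_all_finite (finite_setOf_norm_row_le R)).2 fun M _ ↦
      eventually_re_moeb_neg_iff hτ₀ (hre M)
  filter_upwards [hR, hsign] with τ hτ hsign
  ext M
  exact ⟨fun hM ↦ ⟨hM.1, (hsign M (hτ hM)).1 hM.2⟩,
    fun hM ↦ ⟨hM.1, (hsign M (hR.self_of_nhds hM)).2 hM.2⟩⟩

lemma eventually_floor_re_eq {τ₀ : ℂ} (hre : ∀ M : SL2Z, (moeb M τ₀).re ≠ 0) :
    ∀ᶠ τ in 𝓝 τ₀, ⌊τ.re⌋ = ⌊τ₀.re⌋ := by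
  have hne : (⌊τ₀.re⌋ : ℝ) ≠ τ₀.re := fun heq ↦
    hre ⟨!![1, -⌊τ₀.re⌋; 0, 1], by simp⟩ (by simp [moeb, heq])
  filter_upwards [continuous_re.continuousAt.eventually
    (Ioo_mem_nhds ((Int.floor_le _).lt_of_ne hne) (Int.lt_floor_add_one _))] with τ hτ
  exact Int.floor_eq_iff.2 ⟨hτ.1.le, hτ.2⟩

/-! ### `Ppoly` as a polynomial -/

/-- The integral polynomial `(aX + b)^m (cX + d)^l` attached to `M = (a,b;c,d)`, i.e. the monomial
`X^m` slashed by `M` in weight `-(m + l)`. -/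
def slashMonomial (M : SL2Z) (m l : ℕ) : ℚ[X] :=
  (C (M.1 0 0 : ℚ) * X + C (M.1 0 1 : ℚ)) ^ m * (C (M.1 1 0 : ℚ) * X + C (M.1 1 1 : ℚ)) ^ l

lemma natDegree_slashMonomial_le (M : SL2Z) (m l : ℕ) :
    (slashMonomial M m l).natDegree ≤ m + l := by
  have hpow (x y : ℚ) (j : ℕ) : ((C x * X + C y) ^ j).natDegree ≤ j := by
    simpa using natDegree_pow_le_of_le j (natDegree_linear_le (a := x) (b := y))
  exact natDegree_mul_le.trans (add_le_add (hpow _ _ m) (hpow _ _ l))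

lemma aeval_slashMonomial (M : SL2Z) (m l : ℕ) {τ : ℂ} (hτ : 0 < τ.im) :
    aeval τ (slashMonomial M m l) = jfac M τ ^ (m + l) * moeb M τ ^ m := by
  have hj := jfac_ne_zero M hτ
  rw [moeb, ← jfac, div_pow, pow_add]
  field_simp
  simp [slashMonomial, jfac, mul_comm]

/-- The binomial `X^n - (-1)^n X^{2k-2-n}` slashed by `M` in weight `2 - 2k`: the summand of `Ppoly`
at `M` as a polynomial. -/
def slashBinomial (k n : ℕ) (M : SL2Z) : ℚ[X] :=
  slashMonomial M n (2 * k - 2 - n) - C ((-1) ^ n) * slashMonomial M (2 * k - 2 - n) n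

lemma natDegree_slashBinomial_le {k n : ℕ} (hn : n ≤ 2 * k - 2) (M : SL2Z) :
    (slashBinomial k n M).natDegree ≤ 2 * k - 2 := by
  have hmonomial {m l : ℕ} (h : m + l = 2 * k - 2) :
      (slashMonomial M m l).natDegree ≤ 2 * k - 2 := (natDegree_slashMonomial_le M m l).trans h.le
  exact (natDegree_sub_le_of_le (hmonomial (Nat.add_sub_cancel' hn))
    ((natDegree_C_mul_le _ _).trans (hmonomial (Nat.sub_add_cancel hn)))).trans_eq (max_self _)

lemma aeval_slashBinomial {k n : ℕ} (hn : n ≤ 2 * k - 2) (M : SL2Z) {τ : ℂ} (hτ : 0 < τ.im) :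
    aeval τ (slashBinomial k n M) =
      jfac M τ ^ (2 * k - 2) * (moeb M τ ^ n - (-1) ^ n * moeb M τ ^ (2 * k - 2 - n)) := by
  simp only [slashBinomial, map_sub, map_mul, map_pow, map_neg, map_one,
    aeval_slashMonomial M _ _ hτ, Nat.sub_add_cancel hn, Nat.add_sub_cancel' hn]
  ring

lemma natDegree_bernoulli_le (m : ℕ) : (Polynomial.bernoulli m).natDegree ≤ m := by
  rw [Polynomial.bernoulli]
  exact natDegree_sum_le_of_forall_le _ _ fun i _ ↦
    (natDegree_monomial_le _).trans (Nat.sub_le m i)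

/-- The rational polynomial that agrees with `Ppoly k n` up to the factor `I ^ (n + 1)` on the set
of `τ` with `⌊Re τ⌋ = f` and `crossingMatrices τ = F`. -/
def localPoly (k n : ℕ) (f : ℤ) (F : Finset SL2Z) : ℚ[X] :=
  C ((-1) ^ ((n + 1) / 2) * rnE k n)
    + C ((-1) ^ (n + 1) / ((n : ℚ) + 1)) * (Polynomial.bernoulli (n + 1)).comp (X - C (f : ℚ))
    + C (1 / ((2 * k - 1 - n : ℕ) : ℚ)) *
        (Polynomial.bernoulli (2 * k - 1 - n)).comp (X - C (f : ℚ))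
    + C ((-1) ^ n / 2) * ∑ M ∈ F, slashBinomial k n M

lemma natDegree_localPoly_le {k n : ℕ} (hn0 : 0 < n) (hn1 : n < 2 * k - 2) (f : ℤ)
    (F : Finset SL2Z) : (localPoly k n f F).natDegree ≤ 2 * k - 2 := by
  have hbernoulli {m : ℕ} (hm : m ≤ 2 * k - 2) (r : ℚ) :
      (C r * (Polynomial.bernoulli m).comp (X - C (f : ℚ))).natDegree ≤ 2 * k - 2 := by
    refine (natDegree_C_mul_le _ _).trans ?_
    rw [natDegree_comp, natDegree_X_sub_C, mul_one]
    exact (natDegree_bernoulli_le m).trans hm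
  have hsum : (C ((-1) ^ n / 2) * ∑ M ∈ F, slashBinomial k n M).natDegree ≤ 2 * k - 2 :=
    (natDegree_C_mul_le _ _).trans
      (natDegree_sum_le_of_forall_le _ _ fun M _ ↦ natDegree_slashBinomial_le hn1.le M)
  have hconst (r : ℚ) : (C r).natDegree ≤ 2 * k - 2 := (natDegree_C r).trans_le (Nat.zero_le _)
  exact natDegree_add_le_of_degree_le (natDegree_add_le_of_degree_le
    (natDegree_add_le_of_degree_le (hconst _) (hbernoulli (by omega) _))
    (hbernoulli (by omega) _)) hsum

lemma I_pow_two_mul (m : ℕ) : I ^ (2 * m) = (-1) ^ m := by rw [pow_mul, I_sq]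

lemma I_zpow_one_sub (n : ℕ) : I ^ (1 - (n : ℤ)) = I ^ (n + 1) * (-1) ^ n := by
  have hsq : (-1 : ℂ) ^ n * (-1) ^ n = 1 := by rw [← mul_pow]; simp
  rw [zpow_sub₀ I_ne_zero, zpow_one, zpow_natCast, div_eq_iff (pow_ne_zero n I_ne_zero)]
  linear_combination -(I * (-1) ^ n) * I_pow_two_mul n - I * hsq

lemma rnE_eq_I_pow_mul (k n : ℕ) :
    (rnE k n : ℂ) = I ^ (n + 1) * ((-1) ^ ((n + 1) / 2) * rnE k n) := by
  rcases n.even_or_odd with hn | ⟨m, rfl⟩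
  · simp [rnE, Nat.even_iff.1 hn]
  · rw [show 2 * m + 1 + 1 = 2 * (m + 1) by ring, I_pow_two_mul, Nat.mul_div_cancel_left _ two_pos,
      ← mul_assoc, ← mul_pow]
    simp

lemma Ppoly_eq_I_pow_mul_aeval_localPoly {k n : ℕ} (hn : n ≤ 2 * k - 2) {τ : ℂ} (hτ : 0 < τ.im)
    {F : Finset SL2Z} (hF : crossingMatrices τ = F) :
    Ppoly k n τ = I ^ (n + 1) * aeval τ (localPoly k n ⌊τ.re⌋ F) := by
  have hsum : (∑' M : {M : SL2Z // 0 < M.1 0 0 * M.1 1 0 ∧ (moeb M τ).re < 0},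
      jfac M.1 τ ^ (2 * k - 2) *
        (moeb M.1 τ ^ n - (-1 : ℂ) ^ n * moeb M.1 τ ^ (2 * k - 2 - n))) =
      ∑ M ∈ F, aeval τ (slashBinomial k n M) := by
    simp only [← aeval_slashBinomial hn _ hτ]
    rw [← Finset.tsum_subtype', ← hF]
    rfl
  rw [Ppoly, hsum, rnE_eq_I_pow_mul, neg_pow, I_zpow_one_sub, localPoly]
  simp only [bernPer, bernC, map_add, map_mul, aeval_C, aeval_comp, map_sub, aeval_X, map_sum,
    map_intCast, map_div₀, map_natCast, map_one, map_ofNat, map_pow, map_neg, eq_ratCast]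
  ring

lemma exists_Ppoly_eventuallyEq_I_pow_mul_aeval {k n : ℕ} (hn0 : 0 < n) (hn1 : n < 2 * k - 2)
    {τ₀ : ℂ} (hτ₀ : 0 < τ₀.im) (hre : ∀ M : SL2Z, (moeb M τ₀).re ≠ 0) :
    ∃ p : ℚ[X], p.natDegree ≤ 2 * k - 2 ∧
      Ppoly k n =ᶠ[𝓝 τ₀] fun τ ↦ I ^ (n + 1) * aeval τ p := by
  refine ⟨localPoly k n ⌊τ₀.re⌋ (finite_crossingMatrices hτ₀).toFinset,
    natDegree_localPoly_le hn0 hn1 _ _, ?_⟩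
  filter_upwards [eventually_crossingMatrices_eq hτ₀ hre, eventually_floor_re_eq hre,
    continuous_im.continuousAt.eventually (lt_mem_nhds hτ₀)] with τ hcross hfloor hτ
  rw [← hfloor]
  exact Ppoly_eq_I_pow_mul_aeval_localPoly hn1.le hτ (by simpa using hcross)

lemma exists_rat_raised_Ppoly_cmPoint {k n : ℕ} (hn0 : 0 < n) (hn1 : n < 2 * k - 2) {a b c : ℤ}
    (ha : 0 < a) (hd : b ^ 2 - 4 * a * c < 0)
    (hre : ∀ M : SL2Z, (moeb M (cmPoint a b c)).re ≠ 0) :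
    ∃ q : ℚ, (((((b ^ 2 - 4 * a * c).natAbs : ℝ)) ^ (((k : ℝ) - 1) / 2) : ℝ) : ℂ) *
      raiseIter (2 - 2 * k) (k - 1) (Ppoly k n) (cmPoint a b c) = I ^ (n + 1) * q := by
  obtain ⟨K, rfl⟩ : ∃ K, k = K + 1 := ⟨k - 1, by omega⟩
  obtain ⟨p, hdeg, hp⟩ :=
    exists_Ppoly_eventuallyEq_I_pow_mul_aeval hn0 hn1 (cmPoint_im_pos ha hd) hre
  have hpow : ((b ^ 2 - 4 * a * c).natAbs : ℝ) ^ ((((K + 1 : ℕ) : ℝ) - 1) / 2) =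
      √((b ^ 2 - 4 * a * c).natAbs : ℝ) ^ K := by
    rw [Nat.cast_succ, add_sub_cancel_right, Real.rpow_div_two_eq_sqrt _ (Nat.cast_nonneg _),
      Real.rpow_natCast]
  have hweight : 2 - 2 * ((K + 1 : ℕ) : ℤ) = -(2 * K : ℕ) := by omega
  rw [hpow, ofReal_pow, hweight, Nat.add_sub_cancel, (raiseIter_eventuallyEq hp _ K).eq_of_nhds]
  exact exists_rat_sqrt_disc_pow_mul_raiseIter_aeval ha hd (by omega) _

end

/-- rationality of `|d|^{(k-1)/2} (R_{2-2k}^{k-1} P_{1-k,n})(τ_P)`. -/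
theorem raised_Ppoly_rational (k n : ℕ) (hk : 2 ≤ k) (hn0 : 0 < n) (hn1 : n < 2 * k - 2)
    (a b c : ℤ) (ha : 0 < a) (hd : b ^ 2 - 4 * a * c < 0)
    (hre : ∀ M : SL2Z, (moeb M (cmPoint a b c)).re ≠ 0) :
    (Odd n → ∃ q : ℚ,
      (((((b ^ 2 - 4 * a * c).natAbs : ℝ)) ^ (((k : ℝ) - 1) / 2) : ℝ) : ℂ) *
        raiseIter (2 - 2 * k) (k - 1) (Ppoly k n) (cmPoint a b c) = (q : ℂ)) ∧
    (Even n → ∃ q : ℚ,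
      (((((b ^ 2 - 4 * a * c).natAbs : ℝ)) ^ (((k : ℝ) - 1) / 2) : ℝ) : ℂ) *
        raiseIter (2 - 2 * k) (k - 1) (Ppoly k n) (cmPoint a b c) = (q : ℂ) * Complex.I) := by
  obtain ⟨q, hq⟩ := exists_rat_raised_Ppoly_cmPoint hn0 hn1 ha hd hre
  rw [hq]
  constructor
  · intro hn
    obtain ⟨m, hm⟩ := hn.add_one.two_dvd
    exact ⟨(-1) ^ m * q, by rw [hm, I_pow_two_mul]; push_cast; ring⟩
  · intro hn
    obtain ⟨m, rfl⟩ := hn.two_dvd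
    exact ⟨(-1) ^ m * q, by rw [pow_succ, I_pow_two_mul]; push_cast; ring⟩

end LHMF
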